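/- Each Riesz transform R_j (suitably defined on L^∞ by subtracting K(-y)χ_{|y|≥1}(y) in the kernel) is a bounded linear operator from L^∞(ℝ^n) to BMO(ℝ^n): there is a constant C(n) with ‖R_j(φ)‖_* ≤ C(n)‖φ‖_∞ for all φ ∈ L^∞(ℝ^n). -/

import Mathlib

open MeasureTheory Real Set Filter

/-- Open axis-parallel cube with corner `c` and side length `l`. -/
def cube {n : ℕ} (c : EuclideanSpace ℝ (Fin n)) (l : ℝ) : Set (EuclideanSpace ℝ (Fin n)) :=
  {x | ∀ i, x i ∈ Set.Ioo (c i) (c i + l)}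

/-- Mean of `f` over the cube with corner `c` and side length `l`. -/
noncomputable def cubeAvg {n : ℕ} (f : EuclideanSpace ℝ (Fin n) → ℝ)
    (c : EuclideanSpace ℝ (Fin n)) (l : ℝ) : ℝ :=
  (∫ x in cube c l, f x) / l ^ n

/-- Mean oscillation of `f` over the cube with corner `c` and side length `l`. -/
noncomputable def cubeOsc {n : ℕ} (f : EuclideanSpace ℝ (Fin n) → ℝ)
    (c : EuclideanSpace ℝ (Fin n)) (l : ℝ) : ℝ :=
  (∫ x in cube c l, |f x - cubeAvg f c l|) / l ^ n

/-- `f ∈ BMO(ℝⁿ)`. -/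
def IsBMO {n : ℕ} (f : EuclideanSpace ℝ (Fin n) → ℝ) : Prop :=
  LocallyIntegrable f ∧ ∃ C, ∀ c l, 0 < l → cubeOsc f c l ≤ C

/-- `f ∈ VMO(ℝⁿ)`. -/
def IsVMO {n : ℕ} (f : EuclideanSpace ℝ (Fin n) → ℝ) : Prop :=
  IsBMO f ∧ ∀ ε > (0 : ℝ), ∃ δ > (0 : ℝ), ∀ c l, 0 < l → l ≤ δ → cubeOsc f c l ≤ ε

/-- The `BMO` seminorm `‖f‖_*`. -/
noncomputable def bmoNorm {n : ℕ} (f : EuclideanSpace ℝ (Fin n) → ℝ) : ℝ :=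
  sInf {C : ℝ | 0 ≤ C ∧ ∀ c l, 0 < l → cubeOsc f c l ≤ C}

/-- Riesz kernel `K_j(x) = c_n x_j / |x|^{n+1}` with `c_n = Γ((n+1)/2)/π^((n+1)/2)`. -/
noncomputable def rieszK (n : ℕ) (j : Fin n) (x : EuclideanSpace ℝ (Fin n)) : ℝ :=
  (Real.Gamma (((n : ℝ) + 1) / 2) / Real.pi ^ (((n : ℝ) + 1) / 2)) * x j / ‖x‖ ^ (n + 1)

/-- `ε`-truncation of the Riesz transform of `φ ∈ L²`:
`∫_{|x-y| ≥ ε} K_j(x-y) φ(y) dy`. -/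
noncomputable def rieszTruncL2 {n : ℕ} (j : Fin n) (φ : EuclideanSpace ℝ (Fin n) → ℝ)
    (x : EuclideanSpace ℝ (Fin n)) (ε : ℝ) : ℝ :=
  ∫ y in {y : EuclideanSpace ℝ (Fin n) | ε ≤ dist x y}, rieszK n j (x - y) * φ y

/-- `ε`-truncation of the Riesz transform extended to `L^∞`:
`∫_{|x-y| ≥ ε} (K_j(x-y) - K_j(-y) χ_{|y| ≥ 1}(y)) φ(y) dy`. -/
noncomputable def rieszTruncLinf {n : ℕ} (j : Fin n) (φ : EuclideanSpace ℝ (Fin n) → ℝ)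
    (x : EuclideanSpace ℝ (Fin n)) (ε : ℝ) : ℝ :=
  ∫ y in {y : EuclideanSpace ℝ (Fin n) | ε ≤ dist x y},
    (rieszK n j (x - y) - (if 1 ≤ ‖y‖ then rieszK n j (-y) else 0)) * φ y

/-- `g` is the principal-value Riesz transform (extended to `L^∞`) of `φ`, a.e. -/
def IsRieszTransformLinf {n : ℕ} (j : Fin n) (φ g : EuclideanSpace ℝ (Fin n) → ℝ) : Prop :=
  ∀ᵐ x : EuclideanSpace ℝ (Fin n),
    Tendsto (fun ε => rieszTruncLinf j φ x ε) (nhdsWithin 0 (Set.Ioi 0)) (nhds (g x))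

/-!
The Riesz kernel `K` is odd, homogeneous of degree `-n` and Lipschitz away from `0`. In polar
coordinates, oddness turns the Fourier transform of a truncation `K χ_{ε ≤ |x| < N}` into an average
over directions of integrals `∫ sin (t r) / r dr`, which are bounded uniformly in `t`, `ε` and `N`.
By Plancherel, convolution with these truncations is bounded on `L²` uniformly in `ε` and `N`.

On a ball `B = B(c, D)`, the `ε`-truncated integral at `x` is a near part, the convolution of a
truncation of `K` with `φ χ_{2B}`, plus a far part, the integral over the complement of `2B` of
`(K (x - y) - K (c - y)) φ y`, plus a remainder which tends to a constant independent of `x` as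
`ε → 0`. The `L²` bound controls the near part in `L¹(B)`, Hörmander's condition on `K` bounds the
far part pointwise, and Fatou's lemma passes both bounds to the principal value, so that `R_j φ`
deviates from a constant by `O(‖φ‖_∞)` in the mean over every cube contained in `B` of size
comparable to `D`.
-/

section SineIntegral

theorem abs_integral_sin_div_le {a b : ℝ} (ha : 0 < a) (hab : a ≤ b) :
    |∫ u in a..b, Real.sin u / u| ≤ 2 / a := by
  have hpos {u : ℝ} (hu : u ∈ uIcc a b) : 0 < u := ha.trans_le (uIcc_of_le hab ▸ hu).1
  have hsq : IntervalIntegrable (fun u : ℝ ↦ -(u ^ 2)⁻¹) volume a b :=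
    ContinuousOn.intervalIntegrable fun u hu ↦
      ((continuousAt_id.pow 2).inv₀ (pow_ne_zero 2 (hpos hu).ne')).neg.continuousWithinAt
  have parts : ∫ u in a..b, Real.sin u / u =
      b⁻¹ * -cos b - a⁻¹ * -cos a - ∫ u in a..b, -(u ^ 2)⁻¹ * -cos u := by
    rw [← intervalIntegral.integral_mul_deriv_eq_deriv_mul (v := fun u ↦ -cos u)
      (fun u hu ↦ hasDerivAt_inv (hpos hu).ne')
      (fun u _ ↦ by simpa only [neg_neg] using (hasDerivAt_cos u).fun_neg) hsq
      (continuous_sin.intervalIntegrable a b)]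
    simp only [div_eq_inv_mul]
  have remainder : ‖∫ u in a..b, -(u ^ 2)⁻¹ * -cos u‖ ≤ a⁻¹ - b⁻¹ := calc
    ‖∫ u in a..b, -(u ^ 2)⁻¹ * -cos u‖ ≤ ∫ u in a..b, (u ^ 2)⁻¹ := by
        refine intervalIntegral.norm_integral_le_of_norm_le hab (ae_of_all _ fun u _ ↦ ?_)
          (by simpa only [Pi.neg_def, neg_neg] using hsq.neg)
        rw [norm_mul, norm_neg, norm_neg, norm_inv, norm_pow, norm_eq_abs, sq_abs]
        exact mul_le_of_le_one_right (by positivity) (abs_cos_le_one u)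
    _ = a⁻¹ - b⁻¹ := by
        rw [← neg_inj, ← intervalIntegral.integral_neg,
          intervalIntegral.integral_eq_sub_of_hasDerivAt
            (fun u hu ↦ hasDerivAt_inv (hpos hu).ne') hsq]
        ring
  have boundary {u : ℝ} (hu : 0 < u) : |u⁻¹ * -cos u| ≤ u⁻¹ := by
    rw [abs_mul, abs_neg, abs_of_pos (inv_pos.2 hu)]
    exact mul_le_of_le_one_right (by positivity) (abs_cos_le_one u)
  calc |∫ u in a..b, Real.sin u / u|
      ≤ |b⁻¹ * -cos b| + |a⁻¹ * -cos a| + |∫ u in a..b, -(u ^ 2)⁻¹ * -cos u| := by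
        rw [parts]
        exact (abs_sub _ _).trans (add_le_add_left (abs_sub _ _) _)
    _ ≤ b⁻¹ + a⁻¹ + (a⁻¹ - b⁻¹) :=
        add_le_add_three (boundary (ha.trans_le hab)) (boundary ha) remainder
    _ = 2 / a := by ring

theorem abs_integral_sinc_le_three (x : ℝ) : |∫ u in 0..x, sinc u| ≤ 3 := by
  wlog hx : 0 ≤ x generalizing x
  · have := this (-x) (by linarith)
    rwa [← neg_zero, ← intervalIntegral.integral_comp_neg, intervalIntegral.integral_symm,
      abs_neg, funext sinc_neg] at this
  have near {y : ℝ} (h0 : 0 ≤ y) (h1 : y ≤ 1) : |∫ u in 0..y, sinc u| ≤ 1 := by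
    have := intervalIntegral.norm_integral_le_of_norm_le_const (f := sinc) (a := 0) (b := y)
      fun u _ ↦ abs_sinc_le_one u
    rw [norm_eq_abs, sub_zero, abs_of_nonneg h0] at this
    linarith
  rcases le_total x 1 with h1 | h1
  · linarith [near hx h1]
  have far : |∫ u in 1..x, sinc u| ≤ 2 := by
    rw [intervalIntegral.integral_congr fun u hu ↦
      sinc_of_ne_zero (one_pos.trans_le (uIcc_of_le h1 ▸ hu).1).ne']
    simpa using abs_integral_sin_div_le one_pos h1
  rw [← intervalIntegral.integral_add_adjacent_intervals
    (continuous_sinc.intervalIntegrable 0 1) (continuous_sinc.intervalIntegrable 1 x)]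
  linarith [abs_add_le (∫ u in 0..1, sinc u) (∫ u in 1..x, sinc u), near zero_le_one le_rfl]

theorem abs_integral_sin_mul_div_le_six (t : ℝ) {a b : ℝ} (ha : 0 < a) (hab : a ≤ b) :
    |∫ r in a..b, Real.sin (t * r) / r| ≤ 6 := by
  have hsinc : ∫ r in a..b, Real.sin (t * r) / r =
      (∫ u in 0..t * b, sinc u) - ∫ u in 0..t * a, sinc u := by
    rw [intervalIntegral.integral_interval_sub_left (continuous_sinc.intervalIntegrable _ _)
      (continuous_sinc.intervalIntegrable _ _), ← intervalIntegral.smul_integral_comp_mul_left,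
      smul_eq_mul, ← intervalIntegral.integral_const_mul]
    refine intervalIntegral.integral_congr fun r hr ↦ ?_
    have hr0 : r ≠ 0 := (ha.trans_le (uIcc_of_le hab ▸ hr).1).ne'
    rcases eq_or_ne t 0 with rfl | ht
    · simp
    · simp only [sinc_of_ne_zero (mul_ne_zero ht hr0)]
      field_simp
  rw [hsinc]
  linarith [abs_sub (∫ u in 0..t * b, sinc u) (∫ u in 0..t * a, sinc u),
    abs_integral_sinc_le_three (t * b), abs_integral_sinc_le_three (t * a)]

end SineIntegral

section PolarCoordinates

variable {E F : Type*} [NormedAddCommGroup E] [NormedSpace ℝ E] [FiniteDimensional ℝ E]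
  [MeasurableSpace E] [BorelSpace E] [NormedAddCommGroup F] [NormedSpace ℝ F]

theorem integral_volumeIoiPow (m : ℕ) (g : ℝ → F) :
    ∫ r : Ioi (0 : ℝ), g r ∂(Measure.volumeIoiPow m) = ∫ r in Ioi (0 : ℝ), r ^ m • g r := by
  simp only [Measure.volumeIoiPow, ENNReal.ofReal]
  rw [integral_withDensity_eq_integral_smul (by fun_prop),
    integral_subtype_comap measurableSet_Ioi fun r : ℝ ↦ Real.toNNReal (r ^ m) • g r]
  refine setIntegral_congr_fun measurableSet_Ioi fun r hr ↦ ?_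
  simp only [NNReal.smul_def, Real.coe_toNNReal _ (pow_nonneg (le_of_lt hr) m)]

theorem integral_eq_integral_toSphere_integral_Ioi [Nontrivial E] (μ : Measure E)
    [μ.IsAddHaarMeasure] {f : E → F} (hf : Integrable f μ) :
    ∫ x, f x ∂μ = ∫ θ : Metric.sphere (0 : E) 1,
      ∫ r in Ioi (0 : ℝ), r ^ (Module.finrank ℝ E - 1) • f (r • θ.1) ∂volume ∂μ.toSphere := by
  have hpolar := μ.measurePreserving_homeomorphUnitSphereProd
  have hemb := (homeomorphUnitSphereProd E).measurableEmbedding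
  let g : Metric.sphere (0 : E) 1 × Ioi (0 : ℝ) → F := fun p ↦ f (p.2.1 • p.1.1)
  have hg : g ∘ homeomorphUnitSphereProd E = f ∘ Subtype.val := by
    funext x
    simp [g, smul_smul, mul_inv_cancel₀ (norm_ne_zero_iff.2 x.2)]
  have hgi : Integrable g (μ.toSphere.prod (.volumeIoiPow (Module.finrank ℝ E - 1))) := by
    rw [← hpolar.integrable_comp_emb hemb, hg,
      ← integrableOn_iff_comap_subtypeVal (measurableSet_singleton _).compl]
    exact hf.integrableOn
  calc ∫ x, f x ∂μ = ∫ x : ({0}ᶜ : Set E), (f ∘ Subtype.val) x ∂(μ.comap (↑)) := by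
        rw [Function.comp_def, integral_subtype_comap (measurableSet_singleton _).compl f,
          restrict_compl_singleton]
    _ = ∫ p, g p ∂(μ.toSphere.prod (.volumeIoiPow (Module.finrank ℝ E - 1))) := by
        rw [← hpolar.integral_comp hemb g, ← hg]
        rfl
    _ = ∫ θ : Metric.sphere (0 : E) 1, ∫ r in Ioi (0 : ℝ),
          r ^ (Module.finrank ℝ E - 1) • f (r • θ.1) ∂volume ∂μ.toSphere := by
        rw [integral_prod _ hgi]
        simp only [g]
        exact integral_congr_ae (ae_of_all _ fun θ ↦
          integral_volumeIoiPow (Module.finrank ℝ E - 1) fun r ↦ f (r • θ.1))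

end PolarCoordinates

section InverseNormPow

open Module Measure

variable {E : Type*} [NormedAddCommGroup E] [NormedSpace ℝ E] [FiniteDimensional ℝ E]
  [MeasurableSpace E] [BorelSpace E]

theorem eqOn_pow_smul_indicator_Ici_inv_pow {d : ℕ} (hd : d ≠ 0) (ρ : ℝ) :
    EqOn (fun r ↦ r ^ (d - 1) • (Ici ρ).indicator (fun r : ℝ ↦ (r ^ (d + 1))⁻¹) r)
      ((Ici ρ).indicator fun r : ℝ ↦ r ^ (-2 : ℝ)) (Ioi 0) := by
  intro r hr
  obtain ⟨m, rfl⟩ := Nat.exists_eq_succ_of_ne_zero hd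
  have hr0 : r ≠ 0 := ne_of_gt hr
  have hpow : r ^ (-2 : ℝ) = (r ^ 2)⁻¹ := by exact_mod_cast rpow_neg (le_of_lt hr) 2
  by_cases hmem : r ∈ Ici ρ
  · simp only [indicator_of_mem hmem, hpow, smul_eq_mul, Nat.succ_eq_add_one, add_tsub_cancel_right]
    field_simp
    ring
  · simp only [indicator_of_notMem hmem, smul_zero]

variable [Nontrivial E] (μ : Measure E) [μ.IsAddHaarMeasure] {ρ : ℝ}

theorem integrableOn_inv_norm_pow_finrank_add_one (hρ : 0 < ρ) :
    IntegrableOn (fun y : E ↦ (‖y‖ ^ (finrank ℝ E + 1))⁻¹) (norm ⁻¹' Ici ρ) μ := by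
  rw [← integrable_indicator_iff (measurable_norm measurableSet_Ici)]
  change Integrable (fun y : E ↦ (Ici ρ).indicator (fun r : ℝ ↦ (r ^ (finrank ℝ E + 1))⁻¹) ‖y‖) μ
  rw [integrable_fun_norm_addHaar, integrableOn_congr_fun
      (eqOn_pow_smul_indicator_Ici_inv_pow finrank_pos.ne' ρ) measurableSet_Ioi,
    integrableOn_indicator_iff measurableSet_Ici, inter_eq_left.2 (Ici_subset_Ioi.2 hρ),
    integrableOn_Ici_iff_integrableOn_Ioi]
  exact integrableOn_Ioi_rpow_of_lt (by norm_num) hρ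

theorem setIntegral_inv_norm_pow_finrank_add_one (hρ : 0 < ρ) :
    ∫ y in norm ⁻¹' Ici ρ, (‖y‖ ^ (finrank ℝ E + 1))⁻¹ ∂μ = μ.toSphere.real univ / ρ := by
  rw [← integral_indicator (measurable_norm measurableSet_Ici)]
  change ∫ y, (Ici ρ).indicator (fun r : ℝ ↦ (r ^ (finrank ℝ E + 1))⁻¹) ‖y‖ ∂μ = _
  rw [integral_fun_norm_addHaar, setIntegral_congr_fun measurableSet_Ioi
      (eqOn_pow_smul_indicator_Ici_inv_pow finrank_pos.ne' ρ),
    setIntegral_indicator measurableSet_Ici, inter_eq_right.2 (Ici_subset_Ioi.2 hρ),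
    integral_Ici_eq_integral_Ioi, integral_Ioi_rpow_of_lt (by norm_num) hρ,
    toSphere_real_apply_univ]
  norm_num [rpow_neg_one]
  ring

end InverseNormPow

theorem integral_norm_mul_norm_le_eLpNorm_two {α E F : Type*} [MeasurableSpace α] {μ : Measure α}
    [NormedAddCommGroup E] [NormedAddCommGroup F] {f : α → E} {g : α → F} (hf : MemLp f 2 μ)
    (hg : MemLp g 2 μ) :
    ∫ x, ‖f x‖ * ‖g x‖ ∂μ ≤ (eLpNorm f 2 μ).toReal * (eLpNorm g 2 μ).toReal := by
  have h := integral_mul_norm_le_Lp_mul_Lq (μ := μ) HolderConjugate.two_two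
    (f := fun x ↦ ‖f x‖) (g := fun x ↦ ‖g x‖) (by simpa using hf.norm) (by simpa using hg.norm)
  rw [hf.eLpNorm_eq_integral_rpow_norm two_ne_zero ENNReal.ofNat_ne_top,
    hg.eLpNorm_eq_integral_rpow_norm two_ne_zero ENNReal.ofNat_ne_top,
    ENNReal.toReal_ofReal (by positivity), ENNReal.toReal_ofReal (by positivity)]
  simpa only [ENNReal.toReal_ofNat, one_div, norm_norm] using h

section Indicator

variable {α E : Type*} [MeasurableSpace α] {μ : Measure α} [NormedAddCommGroup E] {s : Set α}

theorem memLp_of_norm_le_indicator_const {p : ENNReal} {g : α → E} (hg : AEStronglyMeasurable g μ)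
    (hs : MeasurableSet s) (hs_fin : μ s ≠ ⊤) {b : ℝ}
    (hgb : ∀ᵐ x ∂μ, ‖g x‖ ≤ s.indicator (fun _ ↦ b) x) : MemLp g p μ :=
  (memLp_indicator_const p hs b (Or.inr hs_fin)).mono hg
    (hgb.mono fun _ hx ↦ hx.trans (le_abs_self _))

theorem toReal_eLpNorm_two_le_of_norm_le_indicator_const {g : α → E} (hs : MeasurableSet s)
    (hs_fin : μ s ≠ ⊤) {b : ℝ} (hb : 0 ≤ b) (hgb : ∀ᵐ x ∂μ, ‖g x‖ ≤ s.indicator (fun _ ↦ b) x) :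
    (eLpNorm g 2 μ).toReal ≤ b * √(μ.real s) := by
  have hle : eLpNorm g 2 μ ≤ eLpNorm (s.indicator fun _ ↦ b) 2 μ :=
    eLpNorm_mono_ae (hgb.mono fun _ hx ↦ hx.trans (le_abs_self _))
  refine (ENNReal.toReal_mono
    (memLp_indicator_const 2 hs b (Or.inr hs_fin)).eLpNorm_ne_top hle).trans_eq ?_
  rw [eLpNorm_indicator_const hs two_ne_zero ENNReal.ofNat_ne_top, ENNReal.toReal_mul,
    ← ENNReal.toReal_rpow, Real.sqrt_eq_rpow]
  simp [abs_of_nonneg hb, Measure.real]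

theorem setIntegral_norm_le_of_forall_integral_mul_le {U : α → ℝ} (hU : AEStronglyMeasurable U μ)
    (hs : MeasurableSet s) {C : ℝ} (hC : ∀ h : α → ℝ, AEStronglyMeasurable h μ →
      (∀ x, ‖h x‖ ≤ s.indicator (fun _ ↦ 1) x) → ∫ x, h x * U x ∂μ ≤ C) :
    ∫ x in s, ‖U x‖ ∂μ ≤ C := by
  let sgn : ℝ → ℝ := fun t ↦ if 0 ≤ t then 1 else -1
  have hsgn : Measurable sgn := measurable_const.ite measurableSet_Ici measurable_const
  have sgn_mul (t : ℝ) : sgn t * t = |t| := by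
    by_cases ht : 0 ≤ t
    · simp [sgn, ht, abs_of_nonneg]
    · simp [sgn, ht, abs_of_neg (not_le.1 ht)]
  rw [← integral_indicator hs]
  convert hC (s.indicator (sgn ∘ U))
    ((hsgn.comp_aemeasurable hU.aemeasurable).aestronglyMeasurable.indicator hs)
    fun x ↦ ?_ using 3 with x
  · by_cases hx : x ∈ s <;> simp [hx, sgn_mul]
  · by_cases hx : x ∈ s
    · simp only [sgn, indicator_of_mem hx, Function.comp_apply]
      split_ifs <;> simp
    · simp [hx]

end Indicator

section Convolution

open scoped Convolution

variable {G : Type*} [MeasurableSpace G] [AddGroup G] [MeasurableAdd₂ G] [MeasurableNeg G]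
  {μ : Measure G} [SFinite μ] [μ.IsAddRightInvariant]

theorem integrable_mul_convolution_integrand {k f h : G → ℝ} (hk : Integrable k μ)
    (hf : MemLp f 2 μ) (hh : MemLp h 2 μ) :
    Integrable (fun p : G × G ↦ h p.1 * (k p.2 * f (p.1 - p.2))) (μ.prod μ) := by
  have hmeas : AEStronglyMeasurable (fun p : G × G ↦ h p.1 * (k p.2 * f (p.1 - p.2))) (μ.prod μ) :=
    hh.aestronglyMeasurable.comp_fst.mul (hk.aestronglyMeasurable.convolution_integrand
      (ContinuousLinearMap.mul ℝ ℝ) hf.aestronglyMeasurable)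
  have hfz (z : G) : MemLp (fun x ↦ f (x - z)) 2 μ :=
    hf.comp_measurePreserving (measurePreserving_sub_right μ z)
  refine (integrable_prod_iff' hmeas).2 ⟨ae_of_all _ fun z ↦ ?_, ?_⟩
  · simpa only [mul_left_comm, Pi.mul_apply] using (hh.integrable_mul (hfz z)).const_mul (k z)
  refine Integrable.mono' (hk.norm.mul_const
    ((eLpNorm h 2 μ).toReal * (eLpNorm f 2 μ).toReal))
    hmeas.norm.prod_swap.integral_prod_right' (ae_of_all _ fun z ↦ ?_)
  have hfz_norm : eLpNorm (fun x ↦ f (x - z)) 2 μ = eLpNorm f 2 μ :=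
    eLpNorm_comp_measurePreserving hf.aestronglyMeasurable (measurePreserving_sub_right μ z)
  calc ‖∫ x, ‖h x * (k z * f (x - z))‖ ∂μ‖ = ‖k z‖ * ∫ x, ‖h x‖ * ‖f (x - z)‖ ∂μ := by
        rw [norm_of_nonneg (integral_nonneg fun _ ↦ norm_nonneg _), ← integral_const_mul]
        simp only [norm_mul, mul_left_comm]
    _ ≤ ‖k z‖ * ((eLpNorm h 2 μ).toReal * (eLpNorm f 2 μ).toReal) := by
        rw [← hfz_norm]
        exact mul_le_mul_of_nonneg_left (integral_norm_mul_norm_le_eLpNorm_two hh (hfz z))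
          (norm_nonneg _)

theorem aestronglyMeasurable_convolution {k f : G → ℝ} (hk : AEStronglyMeasurable k μ)
    (hf : AEStronglyMeasurable f μ) :
    AEStronglyMeasurable (k ⋆[ContinuousLinearMap.mul ℝ ℝ, μ] f) μ :=
  (hk.convolution_integrand (ContinuousLinearMap.mul ℝ ℝ) hf).integral_prod_right'

end Convolution

section Plancherel

open scoped FourierTransform ENNReal SchwartzMap InnerProductSpace Convolution

variable {E : Type*} [NormedAddCommGroup E] [InnerProductSpace ℝ E]

/-- The character `ξ ↦ 𝐞 (-⟪z, ξ⟫)`, by which translation by `z` acts on the Fourier side. -/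
noncomputable def fourierPhase (z ξ : E) : ℂ :=
  𝐞 (-⟪z, ξ⟫_ℝ)

theorem norm_fourierPhase (z ξ : E) : ‖fourierPhase z ξ‖ = 1 :=
  Circle.norm_coe _

theorem continuous_fourierPhase : Continuous fun p : E × E ↦ fourierPhase p.1 p.2 :=
  continuous_subtype_val.comp (continuous_fourierChar.comp (by fun_prop))

variable [MeasurableSpace E] [BorelSpace E]

theorem memLp_top_fourierPhase [SecondCountableTopology E] (z : E) (μ : Measure E) :
    MemLp (fourierPhase z) ∞ μ :=
  memLp_top_of_bound
    (continuous_fourierPhase.comp (Continuous.prodMk_right z)).aestronglyMeasurable 1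
    (ae_of_all _ fun ξ ↦ (norm_fourierPhase z ξ).le)

variable [FiniteDimensional ℝ E]

/-- Translation `f ↦ f (· - z)` as an isometry of the complex space `L²(E)`. -/
noncomputable def l2Translate (z : E) :
    Lp ℂ 2 (volume : Measure E) →ₗᵢ[ℂ] Lp ℂ 2 (volume : Measure E) :=
  Lp.compMeasurePreservingₗᵢ ℂ (fun x ↦ x - z) (measurePreserving_sub_right volume z)

theorem fourier_eq_integral_mul_fourierPhase (k : E → ℂ) (ξ : E) :
    𝓕 k ξ = ∫ z, k z * fourierPhase z ξ := by
  simp only [Real.fourier_eq, fourierPhase, Circle.smul_def, smul_eq_mul, mul_comm]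

theorem schwartz_fourier_compSubConst (z : E) (f : 𝓢(E, ℂ)) (ξ : E) :
    𝓕 (f.compSubConstCLM ℂ z) ξ = fourierPhase z ξ * 𝓕 f ξ := by
  rw [SchwartzMap.fourier_coe, SchwartzMap.fourier_coe, Real.fourier_eq, Real.fourier_eq,
    ← integral_const_mul, ← integral_add_right_eq_self _ z]
  refine integral_congr_ae (ae_of_all _ fun v ↦ ?_)
  simp only [SchwartzMap.compSubConstCLM_apply, add_sub_cancel_right, fourierPhase,
    Circle.smul_def, smul_eq_mul]
  rw [← mul_assoc, ← Circle.coe_mul, ← AddChar.map_add_eq_mul, inner_add_left]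
  congr 3
  ring_nf

theorem fourier_l2Translate (z : E) (f : Lp ℂ 2 (volume : Measure E)) :
    𝓕 (l2Translate z f) = (ContinuousLinearMap.mul ℂ ℂ).holder 2
      (memLp_top_fourierPhase z volume).toLp (𝓕 f) := by
  have hcont : Continuous fun f : Lp ℂ 2 (volume : Measure E) ↦ 𝓕 f :=
    (Lp.fourierTransformₗᵢ E ℂ).continuous
  refine (SchwartzMap.denseRange_toLpCLM (F := ℂ) (p := 2) ENNReal.ofNat_ne_top).induction_on
    (p := fun f ↦ 𝓕 (l2Translate z f) = (ContinuousLinearMap.mul ℂ ℂ).holder 2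
      (memLp_top_fourierPhase z volume).toLp (𝓕 f)) f ?_ fun g ↦ ?_
  · exact isClosed_eq (hcont.comp (l2Translate z).continuous)
      ((((ContinuousLinearMap.mul ℂ ℂ).holderL volume ∞ 2 2
        (memLp_top_fourierPhase z volume).toLp).continuous).comp hcont)
  · have htr : l2Translate z (g.toLp 2) = (g.compSubConstCLM ℂ z).toLp 2 := rfl
    rw [SchwartzMap.toLpCLM_apply, htr, SchwartzMap.toLp_fourier_eq, SchwartzMap.toLp_fourier_eq]
    apply Lp.ext
    filter_upwards [(ContinuousLinearMap.mul ℂ ℂ).coeFn_holder (r := 2)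
        (memLp_top_fourierPhase z volume).toLp ((𝓕 g).toLp 2 (volume : Measure E)),
      (memLp_top_fourierPhase z volume).coeFn_toLp, (𝓕 g).coeFn_toLp 2 volume,
      (𝓕 (g.compSubConstCLM ℂ z)).coeFn_toLp 2 volume] with ξ hmul hphase hg htg
    rw [htg, hmul, hphase, hg, schwartz_fourier_compSubConst, ContinuousLinearMap.mul_apply']

theorem inner_l2Translate_eq_integral (z : E) (f h : Lp ℂ 2 (volume : Measure E)) :
    ⟪h, l2Translate z f⟫_ℂ = ∫ ξ, fourierPhase z ξ * ⟪𝓕 h ξ, 𝓕 f ξ⟫_ℂ := by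
  rw [← Lp.inner_fourier_eq, fourier_l2Translate, L2.inner_def]
  refine integral_congr_ae ?_
  filter_upwards [(ContinuousLinearMap.mul ℂ ℂ).coeFn_holder (r := 2)
      (memLp_top_fourierPhase z volume).toLp (𝓕 f),
    (memLp_top_fourierPhase z volume).coeFn_toLp] with ξ hmul hphase
  rw [hmul, hphase, ContinuousLinearMap.mul_apply', ← smul_eq_mul, inner_smul_right]

theorem norm_integral_mul_inner_l2Translate_le {k : E → ℂ} (hk : Integrable k) {M : ℝ}
    (hM : ∀ ξ, ‖𝓕 k ξ‖ ≤ M) (f h : Lp ℂ 2 (volume : Measure E)) :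
    ‖∫ z, k z * ⟪h, l2Translate z f⟫_ℂ‖ ≤ M * (‖h‖ * ‖f‖) := by
  let F : E → ℂ := fun ξ ↦ ⟪𝓕 h ξ, 𝓕 f ξ⟫_ℂ
  have hF : Integrable F := L2.integrable_inner (𝕜 := ℂ) (𝓕 h) (𝓕 f)
  have hprod : Integrable (fun p : E × E ↦ k p.1 * F p.2 * fourierPhase p.1 p.2) :=
    (hk.mul_prod hF).mul_bdd continuous_fourierPhase.aestronglyMeasurable
      (ae_of_all _ fun p ↦ (norm_fourierPhase _ _).le)
  have hfubini : ∫ z, k z * ⟪h, l2Translate z f⟫_ℂ = ∫ ξ, 𝓕 k ξ * F ξ := calc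
    ∫ z, k z * ⟪h, l2Translate z f⟫_ℂ = ∫ z, ∫ ξ, k z * F ξ * fourierPhase z ξ := by
        simp only [inner_l2Translate_eq_integral, ← integral_const_mul, F, mul_assoc,
          mul_comm (inner ℂ _ _)]
    _ = ∫ ξ, ∫ z, k z * F ξ * fourierPhase z ξ := integral_integral_swap hprod
    _ = ∫ ξ, 𝓕 k ξ * F ξ := by
        simp only [fourier_eq_integral_mul_fourierPhase, ← integral_mul_const,
          mul_right_comm _ (F _)]
  have hF_le : ∫ ξ, ‖F ξ‖ ≤ ‖h‖ * ‖f‖ := calc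
    ∫ ξ, ‖F ξ‖ ≤ ∫ ξ, ‖𝓕 h ξ‖ * ‖𝓕 f ξ‖ :=
        integral_mono hF.norm ((Lp.memLp (𝓕 h)).norm.integrable_mul (Lp.memLp (𝓕 f)).norm)
          fun ξ ↦ norm_inner_le_norm _ _
    _ ≤ ‖𝓕 h‖ * ‖𝓕 f‖ :=
        integral_norm_mul_norm_le_eLpNorm_two (Lp.memLp (𝓕 h)) (Lp.memLp (𝓕 f))
    _ = ‖h‖ * ‖f‖ := by rw [Lp.norm_fourier_eq, Lp.norm_fourier_eq]
  calc ‖∫ z, k z * ⟪h, l2Translate z f⟫_ℂ‖ ≤ ∫ ξ, M * ‖F ξ‖ := by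
        rw [hfubini]
        refine norm_integral_le_of_norm_le (hF.norm.const_mul M) (ae_of_all _ fun ξ ↦ ?_)
        rw [norm_mul]
        exact mul_le_mul_of_nonneg_right (hM ξ) (norm_nonneg _)
    _ ≤ M * (‖h‖ * ‖f‖) := by
        rw [integral_const_mul]
        exact mul_le_mul_of_nonneg_left hF_le ((norm_nonneg _).trans (hM 0))

theorem abs_integral_mul_integral_mul_translate_le {k : E → ℝ} (hk : Integrable k) {M : ℝ}
    (hM : ∀ ξ, ‖𝓕 (fun z ↦ (k z : ℂ)) ξ‖ ≤ M) {f h : E → ℝ} (hf : MemLp f 2) (hh : MemLp h 2) :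
    |∫ z, k z * ∫ x, h x * f (x - z)| ≤
      M * ((eLpNorm h 2 volume).toReal * (eLpNorm f 2 volume).toReal) := by
  have hfC : MemLp (fun x ↦ (f x : ℂ)) 2 := hf.ofReal
  have hhC : MemLp (fun x ↦ (h x : ℂ)) 2 := hh.ofReal
  have norm_toLp {u : E → ℝ} (hu : MemLp (fun x ↦ (u x : ℂ)) 2) :
      ‖hu.toLp‖ = (eLpNorm u 2 volume).toReal := by
    rw [Lp.norm_toLp, eLpNorm_congr_norm_ae (ae_of_all _ fun x ↦ Complex.norm_real (u x))]
  have inner_translate (z : E) :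
      ⟪hhC.toLp, l2Translate z hfC.toLp⟫_ℂ = ((∫ x, h x * f (x - z) : ℝ) : ℂ) := by
    have hfz := hfC.comp_measurePreserving (measurePreserving_sub_right volume z)
    have htr : l2Translate z hfC.toLp = hfz.toLp := rfl
    rw [← integral_complex_ofReal, L2.inner_def, htr]
    refine integral_congr_ae ?_
    filter_upwards [hhC.coeFn_toLp, hfz.coeFn_toLp] with x hx hfx
    simp [hx, hfx, mul_comm]
  have key : ‖∫ z, (k z : ℂ) * ⟪hhC.toLp, l2Translate z hfC.toLp⟫_ℂ‖ ≤ M * (_ * _) :=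
    norm_integral_mul_inner_l2Translate_le hk.ofReal hM hfC.toLp hhC.toLp
  simp only [inner_translate, norm_toLp, ← Complex.ofReal_mul] at key
  rwa [integral_complex_ofReal, Complex.norm_real, norm_eq_abs] at key

theorem lintegral_enorm_convolution_le {k f : E → ℝ} (hk : Integrable k) {M : ℝ}
    (hM : ∀ ξ, ‖𝓕 (fun z ↦ (k z : ℂ)) ξ‖ ≤ M) (hf : MemLp f 2) {Q : Set E}
    (hQ : MeasurableSet Q) (hQ_fin : volume Q ≠ ∞) :
    ∫⁻ x in Q, ‖(k ⋆[ContinuousLinearMap.mul ℝ ℝ, volume] f) x‖ₑ ≤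
      ENNReal.ofReal (M * (√(volume.real Q) * (eLpNorm f 2 volume).toReal)) := by
  set U : E → ℝ := k ⋆[ContinuousLinearMap.mul ℝ ℝ, volume] f with hU
  have hU_meas : AEStronglyMeasurable U :=
    aestronglyMeasurable_convolution hk.aestronglyMeasurable hf.aestronglyMeasurable
  have mul_U (h : E → ℝ) (x : E) : h x * U x = ∫ z, h x * (k z * f (x - z)) := by
    rw [integral_const_mul, ← convolution_mul]
  have hU_int : IntegrableOn U Q := by
    have hprod := integrable_mul_convolution_integrand hk hf
      (memLp_indicator_const 2 hQ (1 : ℝ) (Or.inr hQ_fin))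
    rw [← integrable_indicator_iff hQ]
    refine hprod.integral_prod_left.congr (ae_of_all _ fun x ↦ ?_)
    by_cases hx : x ∈ Q <;> simp [hx, hU, convolution_mul]
  rw [← ofReal_integral_norm_eq_lintegral_enorm hU_int]
  refine ENNReal.ofReal_le_ofReal (setIntegral_norm_le_of_forall_integral_mul_le hU_meas hQ
    fun h h_meas h_le ↦ ?_)
  have hh : MemLp h 2 := memLp_of_norm_le_indicator_const h_meas hQ hQ_fin (ae_of_all _ h_le)
  calc ∫ x, h x * U x = ∫ z, k z * ∫ x, h x * f (x - z) := by
        simp only [mul_U]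
        rw [integral_integral_swap (integrable_mul_convolution_integrand hk hf hh)]
        simp only [← integral_const_mul, mul_left_comm]
    _ ≤ M * ((eLpNorm h 2 volume).toReal * (eLpNorm f 2 volume).toReal) :=
        (le_abs_self _).trans (abs_integral_mul_integral_mul_translate_le hk hM hf hh)
    _ ≤ M * (√(volume.real Q) * (eLpNorm f 2 volume).toReal) := by
        have := (norm_nonneg _).trans (hM 0)
        gcongr
        simpa using
          toReal_eLpNorm_two_le_of_norm_le_indicator_const hQ hQ_fin zero_le_one (ae_of_all _ h_le)

end Plancherel

section OddFourier

open scoped FourierTransform InnerProductSpace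

variable {E : Type*} [NormedAddCommGroup E] [InnerProductSpace ℝ E]

theorem fourierPhase_eq_cos_sub_sin (z ξ : E) :
    fourierPhase z ξ =
      (Real.cos ⟪z, (2 * π) • ξ⟫_ℝ : ℂ) - (Real.sin ⟪z, (2 * π) • ξ⟫_ℝ : ℂ) * Complex.I := by
  rw [fourierPhase, Real.fourierChar_apply, mul_neg, Complex.ofReal_neg, Complex.exp_mul_I,
    Complex.cos_neg, Complex.sin_neg, inner_smul_right, ← Complex.ofReal_cos, ← Complex.ofReal_sin]
  ring

variable [FiniteDimensional ℝ E] [MeasurableSpace E] [BorelSpace E]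

theorem norm_fourier_ofReal_eq_of_odd {k : E → ℝ} (hk : Integrable k) (hodd : ∀ x, k (-x) = -k x)
    (ξ : E) : ‖𝓕 (fun z ↦ (k z : ℂ)) ξ‖ = |∫ z, k z * Real.sin ⟪z, (2 * π) • ξ⟫_ℝ| := by
  have hcos : Integrable fun z ↦ k z * Real.cos ⟪z, (2 * π) • ξ⟫_ℝ :=
    hk.mul_bdd (c := 1) (Continuous.aestronglyMeasurable (by fun_prop))
      (ae_of_all _ fun z ↦ abs_cos_le_one _)
  have hsin : Integrable fun z ↦ k z * Real.sin ⟪z, (2 * π) • ξ⟫_ℝ :=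
    hk.mul_bdd (c := 1) (Continuous.aestronglyMeasurable (by fun_prop))
      (ae_of_all _ fun z ↦ abs_sin_le_one _)
  have cos_part : ∫ z, k z * Real.cos ⟪z, (2 * π) • ξ⟫_ℝ = 0 := by
    have h := integral_neg_eq_self (fun z ↦ k z * Real.cos ⟪z, (2 * π) • ξ⟫_ℝ) volume
    simp only [hodd, inner_neg_left, Real.cos_neg, neg_mul, integral_neg] at h
    linarith
  have split (z : E) : (k z : ℂ) * fourierPhase z ξ = (k z * Real.cos ⟪z, (2 * π) • ξ⟫_ℝ : ℝ) -
      (k z * Real.sin ⟪z, (2 * π) • ξ⟫_ℝ : ℝ) * Complex.I := by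
    rw [fourierPhase_eq_cos_sub_sin]
    push_cast
    ring
  simp only [fourier_eq_integral_mul_fourierPhase, split]
  rw [integral_sub hcos.ofReal (hsin.ofReal.mul_const _), integral_mul_const,
    integral_complex_ofReal, integral_complex_ofReal, cos_part, Complex.ofReal_zero, zero_sub,
    norm_neg, norm_mul, Complex.norm_I, mul_one, Complex.norm_real, norm_eq_abs]

end OddFourier

section Kernel

open Module
open scoped FourierTransform InnerProductSpace

/-- `K` is an odd Calderón–Zygmund kernel with constant `A`: odd, homogeneous of degree `-dim E`,
and of size and smoothness controlled by `A`. The smoothness condition is only imposed where the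
segment from `x` to `y` stays away from the singularity at `0`. -/
structure IsOddCZKernel {E : Type*} [NormedAddCommGroup E] [NormedSpace ℝ E] [MeasurableSpace E]
    (K : E → ℝ) (A : ℝ) : Prop where
  measurable : Measurable K
  map_neg : ∀ x, K (-x) = -K x
  map_smul_of_pos : ∀ (r : ℝ) (x : E), 0 < r → K (r • x) = K x / r ^ finrank ℝ E
  abs_le : ∀ x, |K x| ≤ A / ‖x‖ ^ finrank ℝ E
  abs_sub_le : ∀ x y, 2 * ‖x - y‖ ≤ ‖x‖ →
    |K x - K y| ≤ A * ‖x - y‖ / ‖x‖ ^ (finrank ℝ E + 1)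

/-- The truncation of a kernel `K` to the points whose norm lies in `I`. -/
noncomputable def radialTruncation {E : Type*} [Norm E] (K : E → ℝ) (I : Set ℝ) : E → ℝ :=
  (norm ⁻¹' I).indicator K

theorem radialTruncation_of_mem {E : Type*} [Norm E] {K : E → ℝ} {I : Set ℝ} {x : E}
    (hx : ‖x‖ ∈ I) : radialTruncation K I x = K x :=
  indicator_of_mem (s := norm ⁻¹' I) hx K

theorem radialTruncation_of_notMem {E : Type*} [Norm E] {K : E → ℝ} {I : Set ℝ} {x : E}
    (hx : ‖x‖ ∉ I) : radialTruncation K I x = 0 :=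
  indicator_of_notMem (s := norm ⁻¹' I) hx K

namespace IsOddCZKernel

variable {E : Type*} [NormedAddCommGroup E] {K : E → ℝ} {A : ℝ} {I : Set ℝ}

section NormedSpace

variable [NormedSpace ℝ E] [MeasurableSpace E]

theorem nonneg [Nontrivial E] (hK : IsOddCZKernel K A) : 0 ≤ A := by
  obtain ⟨x, hx⟩ := exists_norm_eq E zero_le_one
  simpa [hx] using (abs_nonneg _).trans (hK.abs_le x)

theorem radialTruncation_neg (hK : IsOddCZKernel K A) (I : Set ℝ) (x : E) :
    radialTruncation K I (-x) = -radialTruncation K I x := by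
  by_cases hx : ‖x‖ ∈ I
  · rw [radialTruncation_of_mem hx, radialTruncation_of_mem (by rwa [norm_neg]), hK.map_neg]
  · rw [radialTruncation_of_notMem hx, radialTruncation_of_notMem (by rwa [norm_neg]), neg_zero]

theorem abs_radialTruncation_le [Nontrivial E] (hK : IsOddCZKernel K A) {s : ℝ} (hs : 0 < s)
    (hI : I ⊆ Ici s) (x : E) : |radialTruncation K I x| ≤ A / s ^ finrank ℝ E := by
  have hA := hK.nonneg
  by_cases hx : ‖x‖ ∈ I
  · have hsx : s ≤ ‖x‖ := hI hx
    rw [radialTruncation_of_mem hx]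
    exact (hK.abs_le x).trans (by gcongr)
  · rw [radialTruncation_of_notMem hx, abs_zero]
    positivity

theorem measurable_radialTruncation [BorelSpace E] (hK : IsOddCZKernel K A)
    (hI : MeasurableSet I) : Measurable (radialTruncation K I) :=
  hK.measurable.indicator (measurable_norm hI)

theorem integrable_radialTruncation_Ico [BorelSpace E] [FiniteDimensional ℝ E] [Nontrivial E]
    (hK : IsOddCZKernel K A) (μ : Measure E) [IsFiniteMeasureOnCompacts μ] {ε : ℝ} (hε : 0 < ε)
    (N : ℝ) : Integrable (radialTruncation K (Ico ε N)) μ := by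
  have hmeas := hK.measurable_radialTruncation (measurableSet_Ico (a := ε) (b := N))
  have hball : (norm ⁻¹' Ico ε N : Set E) ⊆ Metric.ball 0 N := fun x hx ↦ by simpa using hx.2
  refine (integrableOn_iff_integrable_of_support_subset
    (Set.support_indicator_subset.trans hball)).1 ?_
  exact Measure.integrableOn_of_bounded measure_ball_lt_top.ne hmeas.aestronglyMeasurable
    (ae_of_all _ (hK.abs_radialTruncation_le hε Ico_subset_Ici_self))

end NormedSpace

section InnerProductSpace

variable [InnerProductSpace ℝ E] [MeasurableSpace E]

theorem integral_ray_radialTruncation_mul_sin [Nontrivial E] [FiniteDimensional ℝ E]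
    (hK : IsOddCZKernel K A) {ε N : ℝ} (hε : 0 < ε) (hN : ε ≤ N) {θ : E} (hθ : ‖θ‖ = 1) (ξ : E) :
    ∫ r in Ioi (0 : ℝ), r ^ (finrank ℝ E - 1) •
        (radialTruncation K (Ico ε N) (r • θ) * Real.sin ⟪r • θ, ξ⟫_ℝ) =
      K θ * ∫ r in ε..N, Real.sin (⟪θ, ξ⟫_ℝ * r) / r := by
  have hray : EqOn (fun r : ℝ ↦ r ^ (finrank ℝ E - 1) •
        (radialTruncation K (Ico ε N) (r • θ) * Real.sin ⟪r • θ, ξ⟫_ℝ))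
      ((Ico ε N).indicator fun r ↦ K θ * (Real.sin (⟪θ, ξ⟫_ℝ * r) / r)) (Ioi 0) := by
    intro r hr
    have hr0 : 0 < r := hr
    have hnorm : ‖r • θ‖ = r := by rw [norm_smul, hθ, mul_one, norm_of_nonneg hr0.le]
    by_cases hmem : r ∈ Ico ε N
    · simp only [indicator_of_mem hmem, radialTruncation_of_mem (hnorm.symm ▸ hmem), smul_eq_mul,
        hK.map_smul_of_pos r θ hr0, real_inner_smul_left, mul_comm r]
      rw [← Nat.sub_add_cancel (finrank_pos (R := ℝ) (M := E)), pow_succ, add_tsub_cancel_right]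
      field_simp
    · simp only [indicator_of_notMem hmem, radialTruncation_of_notMem (hnorm.symm ▸ hmem),
        zero_mul, smul_zero]
  rw [setIntegral_congr_fun measurableSet_Ioi hray, setIntegral_indicator measurableSet_Ico,
    inter_eq_right.2 (Ico_subset_Ici_self.trans (Ici_subset_Ioi.2 hε)), integral_const_mul,
    integral_Ico_eq_integral_Ioc, ← intervalIntegral.integral_of_le hN]

theorem norm_fourier_radialTruncation_le [Nontrivial E] [FiniteDimensional ℝ E] [BorelSpace E]
    (hK : IsOddCZKernel K A) {ε N : ℝ} (hε : 0 < ε) (hN : ε ≤ N) (ξ : E) :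
    ‖𝓕 (fun z ↦ (radialTruncation K (Ico ε N) z : ℂ)) ξ‖ ≤
      6 * A * (volume : Measure E).toSphere.real univ := by
  have hint := hK.integrable_radialTruncation_Ico volume hε N
  have hsin : Integrable fun z ↦
      radialTruncation K (Ico ε N) z * Real.sin ⟪z, (2 * π) • ξ⟫_ℝ :=
    hint.mul_bdd (c := 1) (Continuous.aestronglyMeasurable (by fun_prop))
      (ae_of_all _ fun z ↦ abs_sin_le_one _)
  rw [norm_fourier_ofReal_eq_of_odd hint (hK.radialTruncation_neg _),
    integral_eq_integral_toSphere_integral_Ioi _ hsin, ← norm_eq_abs]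
  refine norm_integral_le_of_norm_le_const (ae_of_all _ fun θ ↦ ?_)
  have hθ : ‖θ.1‖ = 1 := norm_eq_of_mem_sphere θ
  have hKθ : |K θ| ≤ A := by simpa [hθ] using hK.abs_le θ
  rw [hK.integral_ray_radialTruncation_mul_sin hε hN hθ, norm_mul, norm_eq_abs, norm_eq_abs,
    mul_comm 6 A]
  exact mul_le_mul hKθ (abs_integral_sin_mul_div_le_six _ hε hN) (abs_nonneg _) hK.nonneg

end InnerProductSpace

section Smoothness

variable [NormedSpace ℝ E] [MeasurableSpace E]

theorem norm_sub_comp_sub_le (hK : IsOddCZKernel K A) {u v : E} (huv : 2 * ‖v‖ ≤ ‖u‖) :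
    ‖K u - K (u - v)‖ ≤ A * ‖v‖ * (‖u‖ ^ (finrank ℝ E + 1))⁻¹ := by
  simpa only [sub_sub_cancel, norm_eq_abs, div_eq_mul_inv] using
    hK.abs_sub_le u (u - v) (by rwa [sub_sub_cancel])

variable [FiniteDimensional ℝ E] [BorelSpace E] [Nontrivial E] (μ : Measure E) [μ.IsAddHaarMeasure]

theorem integrableOn_sub_comp_sub (hK : IsOddCZKernel K A) {ρ : ℝ} (hρ : 0 < ρ) {v : E}
    (hv : 2 * ‖v‖ ≤ ρ) : IntegrableOn (fun u ↦ K u - K (u - v)) (norm ⁻¹' Ici ρ) μ := by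
  refine ((integrableOn_inv_norm_pow_finrank_add_one μ hρ).const_mul (A * ‖v‖)).mono'
    (hK.measurable.sub (hK.measurable.comp (measurable_sub_const v))).aestronglyMeasurable ?_
  filter_upwards [ae_restrict_mem (measurable_norm measurableSet_Ici)] with u hu
  exact hK.norm_sub_comp_sub_le (hv.trans hu)

theorem setIntegral_norm_sub_comp_sub_le (hK : IsOddCZKernel K A) {ρ : ℝ} (hρ : 0 < ρ) {v : E}
    (hv : 2 * ‖v‖ ≤ ρ) :
    ∫ u in norm ⁻¹' Ici ρ, ‖K u - K (u - v)‖ ∂μ ≤ A * ‖v‖ * (μ.toSphere.real univ / ρ) := calc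
  ∫ u in norm ⁻¹' Ici ρ, ‖K u - K (u - v)‖ ∂μ
      ≤ ∫ u in norm ⁻¹' Ici ρ, A * ‖v‖ * (‖u‖ ^ (finrank ℝ E + 1))⁻¹ ∂μ :=
    setIntegral_mono_on (hK.integrableOn_sub_comp_sub μ hρ hv).norm
      ((integrableOn_inv_norm_pow_finrank_add_one μ hρ).const_mul _)
      (measurable_norm measurableSet_Ici) fun u hu ↦ hK.norm_sub_comp_sub_le (hv.trans hu)
  _ = A * ‖v‖ * (μ.toSphere.real univ / ρ) := by
    rw [integral_const_mul, setIntegral_inv_norm_pow_finrank_add_one μ hρ]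

theorem integrable_radialTruncation_Ici_sub_comp_sub (hK : IsOddCZKernel K A) {s t : ℝ}
    (hs : 0 < s) (ht : 0 < t) (v : E) :
    Integrable (fun u ↦ radialTruncation K (Ici s) u - radialTruncation K (Ici t) (u - v)) μ := by
  set ρ := 2 * ‖v‖ + s + t
  have hρ0 : 0 < ρ := by positivity
  have hfar : MeasurableSet (norm ⁻¹' Ici ρ : Set E) := measurable_norm measurableSet_Ici
  have hball : (norm ⁻¹' Ici ρ : Set E)ᶜ = Metric.ball 0 ρ := by ext; simp
  rw [← integrableOn_univ, ← union_compl_self (norm ⁻¹' Ici ρ : Set E)]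
  refine .union ?_ ?_
  · refine (hK.integrableOn_sub_comp_sub μ hρ0
      (by linarith : 2 * ‖v‖ ≤ ρ)).congr_fun (fun u hu ↦ ?_) hfar
    have hu : ρ ≤ ‖u‖ := hu
    have hs_le : s ≤ ‖u‖ := by linarith [norm_nonneg v]
    have ht_le : t ≤ ‖u - v‖ := by linarith [norm_sub_norm_le u v, norm_nonneg v]
    simp only [radialTruncation_of_mem (mem_Ici.2 hs_le), radialTruncation_of_mem (mem_Ici.2 ht_le)]
  · rw [hball]
    refine Measure.integrableOn_of_bounded (M := A / s ^ finrank ℝ E + A / t ^ finrank ℝ E)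
      measure_ball_lt_top.ne ?_ (ae_of_all _ fun u ↦ ?_)
    · exact ((hK.measurable_radialTruncation measurableSet_Ici).sub
        ((hK.measurable_radialTruncation measurableSet_Ici).comp
          (measurable_sub_const v))).aestronglyMeasurable
    · exact (norm_sub_le _ _).trans (add_le_add (hK.abs_radialTruncation_le hs subset_rfl u)
        (hK.abs_radialTruncation_le ht subset_rfl (u - v)))

end Smoothness

end IsOddCZKernel

end Kernel

section TruncatedSingularIntegral

open Module Metric
open scoped Topology ENNReal Convolution FourierTransform

theorem lintegral_enorm_le_of_tendsto_ae {α ι E : Type*} [MeasurableSpace α] {μ : Measure α}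
    [NormedAddCommGroup E] {l : Filter ι} [l.NeBot] [l.IsCountablyGenerated] {F : ι → α → E}
    {f : α → E} {C : ℝ≥0∞} (hF : ∀ i, AEStronglyMeasurable (F i) μ)
    (hlim : ∀ᵐ x ∂μ, Tendsto (fun i ↦ F i x) l (𝓝 (f x)))
    (hC : ∀ᶠ i in l, ∫⁻ x, ‖F i x‖ₑ ∂μ ≤ C) : ∫⁻ x, ‖f x‖ₑ ∂μ ≤ C := calc
  ∫⁻ x, ‖f x‖ₑ ∂μ = ∫⁻ x, liminf (fun i ↦ ‖F i x‖ₑ) l ∂μ :=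
    lintegral_congr_ae (hlim.mono fun _ hx ↦ hx.enorm.liminf_eq.symm)
  _ ≤ liminf (fun i ↦ ∫⁻ x, ‖F i x‖ₑ ∂μ) l := lintegral_liminf_le' fun i ↦ (hF i).enorm
  _ ≤ C := liminf_le_of_frequently_le' hC.frequently

theorem preimage_sub_left_norm_preimage_Ici {E : Type*} [SeminormedAddCommGroup E] (c : E)
    (ρ : ℝ) :
    (fun y ↦ c - y) ⁻¹' (norm ⁻¹' Ici ρ) = (ball c ρ)ᶜ := by
  ext y
  simp only [mem_preimage, mem_Ici, mem_compl_iff, mem_ball, not_lt, dist_eq_norm, norm_sub_rev]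

/-- The integrand whose integral is the constant approximating the singular integral on
`B(c, D)`. -/
noncomputable def centralIntegrand {E : Type*} [NormedAddCommGroup E]
    (K φ : E → ℝ) (c : E) (D : ℝ) (y : E) : ℝ :=
  (radialTruncation K (Ici (2 * D)) (c - y) - radialTruncation K (Ici 1) (-y)) * φ y

theorem truncatedSingularIntegrand_eq {E : Type*} [NormedAddCommGroup E] {K φ : E → ℝ}
    {D ε : ℝ} {c x : E} (hεD : ε ≤ D) (hx : dist x c ≤ D) (y : E) :
    {y | ε ≤ dist x y}.indicator
      (fun y ↦ (K (x - y) - if 1 ≤ ‖y‖ then K (-y) else 0) * φ y) y =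
    radialTruncation K (Ico ε (4 * D)) (x - y) * (ball c (2 * D)).indicator φ y +
      (ball c (2 * D))ᶜ.indicator (fun y ↦ (K (x - y) - K (c - y)) * φ y) y +
      {y | ε ≤ dist x y}.indicator (centralIntegrand K φ c D) y := by
  have hone : (if 1 ≤ ‖y‖ then K (-y) else 0) = radialTruncation K (Ici 1) (-y) := by
    simp only [radialTruncation, indicator, mem_preimage, mem_Ici, norm_neg]
  have hxy := dist_triangle x c y
  have hcy := dist_triangle_left c y x
  by_cases hy : dist c y < 2 * D
  · have hball : y ∈ ball c (2 * D) := mem_ball'.2 hy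
    have hcentre : radialTruncation K (Ici (2 * D)) (c - y) = 0 :=
      radialTruncation_of_notMem (by rwa [mem_Ici, ← dist_eq_norm, not_le])
    rw [indicator_of_mem hball, indicator_of_notMem (notMem_compl_iff.2 hball)]
    by_cases hε : y ∈ {y | ε ≤ dist x y}
    · have hnear : radialTruncation K (Ico ε (4 * D)) (x - y) = K (x - y) :=
        radialTruncation_of_mem (by
          rw [← dist_eq_norm]
          exact ⟨hε, by linarith [dist_nonneg (x := c) (y := y)]⟩)
      rw [indicator_of_mem hε, indicator_of_mem hε, hnear, hone,
        centralIntegrand, hcentre]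
      ring
    · have hnear : radialTruncation K (Ico ε (4 * D)) (x - y) = 0 :=
        radialTruncation_of_notMem (by rw [← dist_eq_norm]; exact fun h ↦ hε h.1)
      rw [indicator_of_notMem hε, indicator_of_notMem hε, hnear]
      ring
  · have hball : y ∉ ball c (2 * D) := fun h ↦ hy (mem_ball'.1 h)
    have hε : y ∈ {y | ε ≤ dist x y} := by
      rw [mem_ofPred_eq]
      linarith
    have hcentre : radialTruncation K (Ici (2 * D)) (c - y) = K (c - y) :=
      radialTruncation_of_mem (by rwa [mem_Ici, ← dist_eq_norm, ← not_lt])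
    rw [indicator_of_notMem hball, indicator_of_mem (mem_compl hball), indicator_of_mem hε,
      indicator_of_mem hε, hone, centralIntegrand, hcentre]
    ring

variable {E : Type*} [NormedAddCommGroup E] [InnerProductSpace ℝ E] [FiniteDimensional ℝ E]
  [MeasurableSpace E] [BorelSpace E]

/-- The integral `∫_{|x - y| ≥ ε} (K (x - y) - K (-y) χ_{|y| ≥ 1}) φ y dy`; subtracting `K (-y)`
makes it converge at infinity for bounded `φ`. -/
noncomputable def truncatedSingularIntegral (K φ : E → ℝ) (x : E) (ε : ℝ) : ℝ :=
  ∫ y in {y | ε ≤ dist x y}, (K (x - y) - if 1 ≤ ‖y‖ then K (-y) else 0) * φ y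

/-- `g` is almost everywhere the principal value, as `ε ↓ 0`, of the truncated singular integrals
of `φ` with kernel `K`. -/
def IsPrincipalValue (K φ g : E → ℝ) : Prop :=
  ∀ᵐ x, Tendsto (fun ε ↦ truncatedSingularIntegral K φ x ε) (𝓝[>] 0) (𝓝 (g x))

/-- The part of the singular integral which is singular on the ball `B(c, D)`: a compactly supported
truncation of `K` convolved with the restriction of `φ` to `B(c, 2D)`. -/
noncomputable def nearPart (K φ : E → ℝ) (c : E) (D ε : ℝ) : E → ℝ :=
  radialTruncation K (Ico ε (4 * D)) ⋆[ContinuousLinearMap.mul ℝ ℝ, volume]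
    (ball c (2 * D)).indicator φ

/-- The contribution of `φ` outside `B(c, 2D)` to the oscillation of the singular integral between
`x` and `c`. -/
noncomputable def farPart (K φ : E → ℝ) (c : E) (D : ℝ) (x : E) : ℝ :=
  ∫ y in (ball c (2 * D))ᶜ, (K (x - y) - K (c - y)) * φ y

theorem aecover_setOf_le_dist [Nontrivial E] (x : E) :
    AECover (volume : Measure E) (𝓝[>] 0) fun ε : ℝ ↦ {y | ε ≤ dist x y} where
  ae_eventually_mem := by
    filter_upwards [compl_mem_ae_iff.2 (measure_singleton x)] with y hy
    have hxy : 0 < dist x y := dist_pos.2 (Ne.symm hy)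
    exact nhdsWithin_le_nhds (Iic_mem_nhds hxy)
  measurableSet _ := measurableSet_le measurable_const (by fun_prop)

theorem aestronglyMeasurable_truncatedSingularIntegral {K φ : E → ℝ} (hK : Measurable K)
    (hφ : AEStronglyMeasurable φ) (ε : ℝ) :
    AEStronglyMeasurable fun x ↦ truncatedSingularIntegral K φ x ε := by
  have hset : MeasurableSet {p : E × E | ε ≤ dist p.1 p.2} :=
    measurableSet_le measurable_const (by fun_prop)
  have hkernel : Measurable fun p : E × E ↦
      K (p.1 - p.2) - if 1 ≤ ‖p.2‖ then K (-p.2) else 0 :=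
    (hK.comp (by fun_prop)).sub (Measurable.ite (measurableSet_le measurable_const (by fun_prop))
      (hK.comp (by fun_prop)) measurable_const)
  have hint := ((hkernel.aestronglyMeasurable.mul hφ.comp_snd).indicator hset).integral_prod_right'
    (μ := (volume : Measure E)) (ν := volume)
  refine hint.congr (ae_of_all _ fun x ↦ ?_)
  simp only [truncatedSingularIntegral]
  rw [← integral_indicator (measurableSet_le measurable_const (by fun_prop))]
  rfl

theorem IsPrincipalValue.aestronglyMeasurable {K φ g : E → ℝ} (hg : IsPrincipalValue K φ g)
    (hK : Measurable K) (hφ : AEStronglyMeasurable φ) : AEStronglyMeasurable g :=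
  aestronglyMeasurable_of_tendsto_ae (𝓝[>] 0)
    (aestronglyMeasurable_truncatedSingularIntegral hK hφ) hg

namespace IsOddCZKernel

variable [Nontrivial E] {K φ : E → ℝ} {A B D ε : ℝ} {c x : E}

theorem integrable_radialTruncation_Ici_sub (hK : IsOddCZKernel K A) {s t : ℝ} (hs : 0 < s)
    (ht : 0 < t) (z w : E) : Integrable fun y ↦
      radialTruncation K (Ici s) (z - y) - radialTruncation K (Ici t) (w - y) := by
  have := (hK.integrable_radialTruncation_Ici_sub_comp_sub volume hs ht (z - w)).comp_sub_left z
  simpa only [sub_sub_sub_cancel_left, sub_right_comm z _ (z - w), sub_sub_cancel] using this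

theorem integrable_centralIntegrand (hK : IsOddCZKernel K A) (hφ : AEStronglyMeasurable φ)
    (hB : ∀ᵐ y, ‖φ y‖ ≤ B) (c : E) (hD : 0 < D) : Integrable (centralIntegrand K φ c D) := by
  have := hK.integrable_radialTruncation_Ici_sub (mul_pos two_pos hD) one_pos c 0
  simp only [zero_sub] at this
  exact this.mul_bdd hφ hB

theorem integrableOn_far (hK : IsOddCZKernel K A) (hD : 0 < D) (hx : dist x c ≤ D) :
    IntegrableOn (fun y ↦ K (x - y) - K (c - y)) (ball c (2 * D))ᶜ := by
  have hv : 2 * ‖c - x‖ ≤ 2 * D := by rw [← dist_eq_norm, dist_comm]; gcongr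
  have := ((Measure.measurePreserving_sub_left volume c).integrableOn_comp_preimage
    (measurableEmbedding_subLeft c)).2
      (hK.integrableOn_sub_comp_sub volume (mul_pos two_pos hD) hv)
  rw [preimage_sub_left_norm_preimage_Ici] at this
  refine this.neg.congr (ae_of_all _ fun y ↦ ?_)
  simp only [Pi.neg_apply, Function.comp_apply, neg_sub, sub_sub_sub_cancel_left]

theorem setIntegral_far_le (hK : IsOddCZKernel K A) (hD : 0 < D) (hx : dist x c ≤ D) :
    ∫ y in (ball c (2 * D))ᶜ, ‖K (x - y) - K (c - y)‖ ≤
      A * (volume : Measure E).toSphere.real univ / 2 := by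
  have hxc : ‖c - x‖ ≤ D := by rwa [← dist_eq_norm, dist_comm]
  have hv : 2 * ‖c - x‖ ≤ 2 * D := by gcongr
  calc ∫ y in (ball c (2 * D))ᶜ, ‖K (x - y) - K (c - y)‖
      = ∫ u in norm ⁻¹' Ici (2 * D), ‖K u - K (u - (c - x))‖ := by
        rw [← preimage_sub_left_norm_preimage_Ici,
          ← (Measure.measurePreserving_sub_left volume c).setIntegral_preimage_emb
            (measurableEmbedding_subLeft c) (fun u ↦ ‖K u - K (u - (c - x))‖)]
        simp only [sub_sub_sub_cancel_left, norm_sub_rev]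
    _ ≤ A * ‖c - x‖ * ((volume : Measure E).toSphere.real univ / (2 * D)) :=
        hK.setIntegral_norm_sub_comp_sub_le volume (mul_pos two_pos hD) hv
    _ ≤ A * D * ((volume : Measure E).toSphere.real univ / (2 * D)) := by
        have := hK.nonneg
        gcongr
    _ = A * (volume : Measure E).toSphere.real univ / 2 := by field_simp

theorem abs_farPart_le (hK : IsOddCZKernel K A) (hB : ∀ᵐ y, ‖φ y‖ ≤ B) (hD : 0 < D)
    (hx : dist x c ≤ D) :
    |farPart K φ c D x| ≤ A * (volume : Measure E).toSphere.real univ / 2 * B := by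
  obtain ⟨y, hy⟩ := hB.exists
  have hB0 : 0 ≤ B := (norm_nonneg _).trans hy
  calc |farPart K φ c D x| = ‖∫ y in (ball c (2 * D))ᶜ, (K (x - y) - K (c - y)) * φ y‖ := rfl
    _ ≤ ∫ y in (ball c (2 * D))ᶜ, ‖K (x - y) - K (c - y)‖ * B := by
        refine norm_integral_le_of_norm_le ((hK.integrableOn_far hD hx).norm.mul_const B) ?_
        filter_upwards [ae_restrict_of_ae hB] with y hy
        rw [norm_mul]
        gcongr
    _ = (∫ y in (ball c (2 * D))ᶜ, ‖K (x - y) - K (c - y)‖) * B := integral_mul_const _ _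
    _ ≤ A * (volume : Measure E).toSphere.real univ / 2 * B := by
        gcongr
        exact hK.setIntegral_far_le hD hx

theorem truncatedSingularIntegral_eq_nearPart_add_farPart (hK : IsOddCZKernel K A)
    (hφ : AEStronglyMeasurable φ) (hB : ∀ᵐ y, ‖φ y‖ ≤ B) (hε : 0 < ε) (hεD : ε ≤ D)
    (hx : dist x c ≤ D) :
    truncatedSingularIntegral K φ x ε = nearPart K φ c D ε x + farPart K φ c D x +
      ∫ y in {y | ε ≤ dist x y}, centralIntegrand K φ c D y := by
  have hD : 0 < D := hε.trans_le hεD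
  have hS : MeasurableSet {y | ε ≤ dist x y} := measurableSet_le measurable_const (by fun_prop)
  have hnear : Integrable fun y ↦
      radialTruncation K (Ico ε (4 * D)) (x - y) * (ball c (2 * D)).indicator φ y :=
    ((hK.integrable_radialTruncation_Ico volume hε _).comp_sub_left x).mul_bdd
      (hφ.indicator measurableSet_ball) (hB.mono fun y hy ↦
        (norm_indicator_le_norm_self _ _).trans hy)
  have hfar : Integrable ((ball c (2 * D))ᶜ.indicator fun y ↦ (K (x - y) - K (c - y)) * φ y) :=
    (integrable_indicator_iff measurableSet_ball.compl).2
      ((hK.integrableOn_far hD hx).mul_bdd hφ.restrict (ae_restrict_of_ae hB))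
  have hcentral := (hK.integrable_centralIntegrand hφ hB c hD).indicator hS
  rw [truncatedSingularIntegral, nearPart, convolution_mul_swap, farPart,
    ← integral_indicator hS, ← integral_indicator measurableSet_ball.compl,
    ← integral_indicator hS]
  simp only [truncatedSingularIntegrand_eq hεD hx]
  have hadd := integral_add (hnear.add hfar) hcentral
  simp only [Pi.add_apply] at hadd
  rw [hadd, integral_add hnear hfar]

theorem tendsto_nearPart (hK : IsOddCZKernel K A) (hφ : AEStronglyMeasurable φ)
    (hB : ∀ᵐ y, ‖φ y‖ ≤ B) (hx : dist x c ≤ D) (hD : 0 < D) {b : ℝ}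
    (hb : Tendsto (fun ε ↦ truncatedSingularIntegral K φ x ε) (𝓝[>] 0) (𝓝 b)) :
    Tendsto (fun ε ↦ nearPart K φ c D ε x) (𝓝[>] 0)
      (𝓝 (b - farPart K φ c D x - ∫ y, centralIntegrand K φ c D y)) := by
  have hcentral := (aecover_setOf_le_dist x).integral_tendsto_of_countably_generated
    (hK.integrable_centralIntegrand hφ hB c hD)
  refine ((hb.sub_const (farPart K φ c D x)).sub hcentral).congr' ?_
  filter_upwards [Ioc_mem_nhdsGT hD] with ε hε
  rw [hK.truncatedSingularIntegral_eq_nearPart_add_farPart hφ hB hε.1 hε.2 hx]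
  ring

theorem lintegral_enorm_nearPart_le (hK : IsOddCZKernel K A) (hφ : AEStronglyMeasurable φ)
    (hB : ∀ᵐ y, ‖φ y‖ ≤ B) (c : E) (hε : 0 < ε) (hεD : ε ≤ D) :
    ∫⁻ x in closedBall c D, ‖nearPart K φ c D ε x‖ₑ ≤ ENNReal.ofReal
      (6 * A * (volume : Measure E).toSphere.real univ * B * volume.real (ball c (2 * D))) := by
  obtain ⟨y, hy⟩ := hB.exists
  have hB0 : 0 ≤ B := (norm_nonneg _).trans hy
  have hA := hK.nonneg
  have hball : closedBall c D ⊆ ball c (2 * D) := closedBall_subset_ball (by linarith)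
  have hball_fin : volume (ball c (2 * D)) ≠ ∞ := measure_ball_lt_top.ne
  have hf_le : ∀ᵐ y, ‖(ball c (2 * D)).indicator φ y‖ ≤ (ball c (2 * D)).indicator (fun _ ↦ B) y :=
    hB.mono fun y hy ↦ by
      rw [norm_indicator_eq_indicator_norm]
      exact indicator_le_indicator hy
  have hf : MemLp ((ball c (2 * D)).indicator φ) 2 :=
    memLp_of_norm_le_indicator_const (hφ.indicator measurableSet_ball) measurableSet_ball
      hball_fin hf_le
  refine (lintegral_enorm_convolution_le (hK.integrable_radialTruncation_Ico volume hε _)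
    (hK.norm_fourier_radialTruncation_le hε (by linarith)) hf measurableSet_closedBall
    measure_closedBall_lt_top.ne).trans (ENNReal.ofReal_le_ofReal ?_)
  set V := volume.real (ball c (2 * D))
  calc 6 * A * (volume : Measure E).toSphere.real univ *
        (√(volume.real (closedBall c D)) *
          (eLpNorm ((ball c (2 * D)).indicator φ) 2 volume).toReal)
      ≤ 6 * A * (volume : Measure E).toSphere.real univ * (√V * (B * √V)) := by
        gcongr
        · exact measureReal_mono hball hball_fin
        · exact toReal_eLpNorm_two_le_of_norm_le_indicator_const measurableSet_ball hball_fin hB0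
            hf_le
    _ = 6 * A * (volume : Measure E).toSphere.real univ * B * V := by
        rw [mul_left_comm √V, Real.mul_self_sqrt measureReal_nonneg, ← mul_assoc]

theorem lintegral_enorm_sub_farPart_sub_le (hK : IsOddCZKernel K A) (hφ : AEStronglyMeasurable φ)
    (hB : ∀ᵐ y, ‖φ y‖ ≤ B) {g : E → ℝ} (hg : IsPrincipalValue K φ g) (c : E) (hD : 0 < D) :
    ∫⁻ x in closedBall c D, ‖g x - farPart K φ c D x - ∫ y, centralIntegrand K φ c D y‖ₑ ≤
      ENNReal.ofReal
        (6 * A * (volume : Measure E).toSphere.real univ * B * volume.real (ball c (2 * D))) := by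
  have hlim : ∀ᵐ x ∂volume.restrict (closedBall c D), Tendsto (fun ε ↦ nearPart K φ c D ε x)
      (𝓝[>] 0) (𝓝 (g x - farPart K φ c D x - ∫ y, centralIntegrand K φ c D y)) := by
    filter_upwards [ae_restrict_mem measurableSet_closedBall, ae_restrict_of_ae hg] with x hx hgx
    exact hK.tendsto_nearPart hφ hB hx hD hgx
  exact lintegral_enorm_le_of_tendsto_ae
    (fun ε ↦ (aestronglyMeasurable_convolution
      (hK.measurable_radialTruncation measurableSet_Ico).aestronglyMeasurable
      (hφ.indicator measurableSet_ball)).restrict) hlim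
    (mem_of_superset (Ioc_mem_nhdsGT hD) fun ε hε ↦
      hK.lintegral_enorm_nearPart_le hφ hB c hε.1 hε.2)

theorem exists_lintegral_enorm_sub_const_le (hK : IsOddCZKernel K A) (hφ : AEStronglyMeasurable φ)
    (hB : ∀ᵐ y, ‖φ y‖ ≤ B) {g : E → ℝ} (hg : IsPrincipalValue K φ g) (c : E) (hD : 0 < D) :
    ∃ a, ∫⁻ x in closedBall c D, ‖g x - a‖ₑ ≤ ENNReal.ofReal
      (7 * A * (volume : Measure E).toSphere.real univ * B * volume.real (ball c (2 * D))) := by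
  obtain ⟨y, hy⟩ := hB.exists
  have hB0 : 0 ≤ B := (norm_nonneg _).trans hy
  have hA := hK.nonneg
  set σ := (volume : Measure E).toSphere.real univ
  set V := volume.real (ball c (2 * D))
  have hball_fin : volume (ball c (2 * D)) ≠ ∞ := measure_ball_lt_top.ne
  set a := ∫ y, centralIntegrand K φ c D y
  have hnear := hK.lintegral_enorm_sub_farPart_sub_le hφ hB hg c hD
  refine ⟨a, ?_⟩
  calc ∫⁻ x in closedBall c D, ‖g x - a‖ₑ
      ≤ ∫⁻ x in closedBall c D,
          (‖g x - farPart K φ c D x - a‖ₑ + ENNReal.ofReal (A * σ / 2 * B)) := by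
        refine setLIntegral_mono' measurableSet_closedBall fun x hx ↦ ?_
        have hfar : ‖farPart K φ c D x‖ₑ ≤ ENNReal.ofReal (A * σ / 2 * B) := by
          rw [enorm_eq_ofReal_abs]
          exact ENNReal.ofReal_le_ofReal (hK.abs_farPart_le hB hD hx)
        calc ‖g x - a‖ₑ = ‖(g x - farPart K φ c D x - a) + farPart K φ c D x‖ₑ := by congr 1; ring
          _ ≤ _ := (enorm_add_le _ _).trans (by gcongr)
    _ ≤ ENNReal.ofReal (6 * A * σ * B * V) +
          ENNReal.ofReal (A * σ / 2 * B) * ENNReal.ofReal V := by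
        rw [lintegral_add_right _ measurable_const, setLIntegral_const,
          ofReal_measureReal hball_fin]
        gcongr
        exact closedBall_subset_ball (by linarith)
    _ ≤ ENNReal.ofReal (7 * A * σ * B * V) := by
        have : 0 ≤ V := measureReal_nonneg
        have : 0 ≤ σ := measureReal_nonneg
        rw [← ENNReal.ofReal_mul (by positivity), ← ENNReal.ofReal_add (by positivity)
          (by positivity)]
        refine ENNReal.ofReal_le_ofReal ?_
        have : 0 ≤ A * σ * B * V := by positivity
        linarith

end IsOddCZKernel

end TruncatedSingularIntegral

section MeanOscillation

variable {α : Type*} [MeasurableSpace α] {μ : Measure α} {s : Set α} {f : α → ℝ}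

theorem integrableOn_of_lintegral_enorm_sub_const_lt_top (hf : AEStronglyMeasurable f μ)
    (hs : μ s ≠ ⊤) (a : ℝ) (ha : ∫⁻ x in s, ‖f x - a‖ₑ ∂μ < ⊤) : IntegrableOn f s μ := by
  have hsub : IntegrableOn (fun x ↦ f x - a) s μ :=
    ⟨(hf.sub aestronglyMeasurable_const).restrict, ha⟩
  simpa only [IntegrableOn, Pi.add_def, sub_add_cancel] using
    hsub.add (integrableOn_const (C := a) hs)

theorem setIntegral_abs_sub_setAverage_le (hf : IntegrableOn f s μ) (hs : μ s ≠ ⊤) (a : ℝ) :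
    ∫ x in s, |f x - ⨍ y in s, f y ∂μ| ∂μ ≤ 2 * ∫ x in s, |f x - a| ∂μ := by
  set m := ⨍ y in s, f y ∂μ
  have hconst (b : ℝ) : IntegrableOn (fun _ ↦ b) s μ := integrableOn_const hs
  have hmean : μ.real s * |a - m| ≤ ∫ x in s, |f x - a| ∂μ := calc
    μ.real s * |a - m| = |∫ x in s, (f x - a) ∂μ| := by
      rw [integral_sub hf (hconst a), ← measure_smul_setAverage f hs, setIntegral_const,
        ← smul_sub, smul_eq_mul, abs_mul, abs_of_nonneg measureReal_nonneg, abs_sub_comm]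
    _ ≤ ∫ x in s, |f x - a| ∂μ := abs_integral_le_integral_abs
  calc ∫ x in s, |f x - m| ∂μ ≤ ∫ x in s, (|f x - a| + |a - m|) ∂μ :=
        integral_mono (hf.sub (hconst m)).abs ((hf.sub (hconst a)).abs.add (hconst _))
          fun x ↦ abs_sub_le (f x) a m
    _ = (∫ x in s, |f x - a| ∂μ) + μ.real s * |a - m| := by
        have hsub : IntegrableOn (fun x ↦ |f x - a|) s μ := (hf.sub (hconst a)).abs
        rw [integral_add hsub (hconst _), setIntegral_const, smul_eq_mul]
    _ ≤ 2 * ∫ x in s, |f x - a| ∂μ := by linarith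

end MeanOscillation

section Cube

open Metric

variable {n : ℕ} {c : EuclideanSpace ℝ (Fin n)} {l : ℝ}

theorem cube_eq_preimage_pi (c : EuclideanSpace ℝ (Fin n)) (l : ℝ) :
    cube c l = WithLp.ofLp ⁻¹' univ.pi fun i ↦ Ioo (c i) (c i + l) := by
  ext x
  simp only [cube, mem_ofPred_eq, mem_preimage, mem_univ_pi]

theorem isOpen_cube : IsOpen (cube c l) := by
  rw [cube_eq_preimage_pi]
  exact (isOpen_set_pi finite_univ fun _ _ ↦ isOpen_Ioo).preimage (PiLp.continuous_ofLp 2 _)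

theorem volume_cube (c : EuclideanSpace ℝ (Fin n)) (hl : 0 ≤ l) :
    volume (cube c l) = ENNReal.ofReal (l ^ n) := by
  rw [cube_eq_preimage_pi, (PiLp.volume_preserving_ofLp (Fin n)).measure_preimage
    (MeasurableSet.univ_pi fun _ ↦ measurableSet_Ioo).nullMeasurableSet, volume_pi_Ioo]
  simp only [add_sub_cancel_left, Finset.prod_const, Finset.card_univ, Fintype.card_fin,
    ENNReal.ofReal_pow hl]

theorem volume_real_cube (c : EuclideanSpace ℝ (Fin n)) (hl : 0 ≤ l) :
    volume.real (cube c l) = l ^ n := by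
  rw [measureReal_def, volume_cube c hl, ENNReal.toReal_ofReal (pow_nonneg hl n)]

theorem cube_subset_closedBall : cube c l ⊆ closedBall c (n * l) := by
  intro x hx
  rw [mem_closedBall, dist_eq_norm]
  calc ‖x - c‖ = √(∑ i, ‖(x - c) i‖ ^ 2) := EuclideanSpace.norm_eq _
    _ ≤ ∑ i, ‖(x - c) i‖ := sqrt_le_iff.2 ⟨Finset.sum_nonneg fun _ _ ↦ norm_nonneg _,
        Finset.sum_sq_le_sq_sum_of_nonneg fun _ _ ↦ norm_nonneg _⟩
    _ ≤ ∑ _i : Fin n, l := Finset.sum_le_sum fun i _ ↦ by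
        rw [PiLp.sub_apply, norm_eq_abs, abs_le]
        constructor <;> linarith [(hx i).1, (hx i).2]
    _ = n * l := by simp only [Finset.sum_const, Finset.card_univ, Fintype.card_fin, nsmul_eq_mul]

theorem mem_cube_toLp_sub_one (x : EuclideanSpace ℝ (Fin n)) :
    x ∈ cube (WithLp.toLp 2 fun i ↦ x i - 1) 2 := fun i ↦ by
  simp only [mem_Ioo]
  constructor <;> linarith

theorem cubeAvg_eq_setAverage (f : EuclideanSpace ℝ (Fin n) → ℝ) (c : EuclideanSpace ℝ (Fin n))
    (hl : 0 ≤ l) : cubeAvg f c l = ⨍ x in cube c l, f x := by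
  rw [cubeAvg, setAverage_eq, volume_real_cube c hl, smul_eq_mul, div_eq_inv_mul]

theorem cubeOsc_le_of_lintegral_enorm_sub_le {f : EuclideanSpace ℝ (Fin n) → ℝ} {a M : ℝ}
    (hf : IntegrableOn f (cube c l)) (hl : 0 < l) (hM : 0 ≤ M)
    (ha : ∫⁻ x in cube c l, ‖f x - a‖ₑ ≤ ENNReal.ofReal (M * l ^ n)) :
    cubeOsc f c l ≤ 2 * M := by
  have hfin : volume (cube c l) ≠ ⊤ := by
    rw [volume_cube c hl.le]
    exact ENNReal.ofReal_ne_top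
  have hmeas : AEStronglyMeasurable (fun x ↦ f x - a) (volume.restrict (cube c l)) :=
    hf.aestronglyMeasurable.sub aestronglyMeasurable_const
  have hdev : ∫ x in cube c l, |f x - a| ≤ M * l ^ n := by
    simp only [← norm_eq_abs, integral_norm_eq_lintegral_enorm hmeas]
    exact ENNReal.toReal_le_of_le_ofReal (by positivity) ha
  rw [cubeOsc, div_le_iff₀ (pow_pos hl n), cubeAvg_eq_setAverage f c hl.le]
  linarith [setIntegral_abs_sub_setAverage_le hf hfin a]

end Cube

section BMO

open Module Metric

variable {n : ℕ} [NeZero n] {K φ g : EuclideanSpace ℝ (Fin n) → ℝ} {A B : ℝ}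

theorem IsOddCZKernel.exists_lintegral_cube_enorm_sub_const_le (hK : IsOddCZKernel K A)
    (hφ : AEStronglyMeasurable φ) (hB : ∀ᵐ y, ‖φ y‖ ≤ B) (hg : IsPrincipalValue K φ g)
    (c : EuclideanSpace ℝ (Fin n)) {l : ℝ} (hl : 0 < l) :
    ∃ a, ∫⁻ x in cube c l, ‖g x - a‖ₑ ≤ ENNReal.ofReal
      (7 * A * (volume : Measure (EuclideanSpace ℝ (Fin n))).toSphere.real univ * B *
        (volume : Measure (EuclideanSpace ℝ (Fin n))).real (ball 0 (2 * n)) * l ^ n) := by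
  have hn : (0 : ℝ) < n := Nat.cast_pos.2 (NeZero.pos n)
  obtain ⟨a, ha⟩ := hK.exists_lintegral_enorm_sub_const_le hφ hB hg c (mul_pos hn hl)
  have hball : (volume : Measure (EuclideanSpace ℝ (Fin n))).real (ball c (2 * (n * l))) =
      l ^ n * (volume : Measure (EuclideanSpace ℝ (Fin n))).real (ball 0 (2 * n)) := by
    rw [← mul_assoc, mul_comm _ l, measureReal_def, Measure.addHaar_ball_mul_of_pos _ _ hl,
      finrank_euclideanSpace_fin, ENNReal.toReal_mul, ENNReal.toReal_ofReal (by positivity),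
      ← measureReal_def]
  refine ⟨a, (lintegral_mono_set cube_subset_closedBall).trans (ha.trans_eq ?_)⟩
  rw [hball, mul_comm (l ^ n), ← mul_assoc]

theorem riesz_linf_to_bmo_general (n : ℕ) [NeZero n] (A : ℝ) :
    ∃ C > (0 : ℝ), ∀ K φ g : EuclideanSpace ℝ (Fin n) → ℝ, ∀ B : ℝ, IsOddCZKernel K A →
      AEStronglyMeasurable φ → (∀ᵐ x, |φ x| ≤ B) → IsPrincipalValue K φ g →
      IsBMO g ∧ ∀ c l, 0 < l → cubeOsc g c l ≤ C * B := by
  set σ := (volume : Measure (EuclideanSpace ℝ (Fin n))).toSphere.real univ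
  set V := (volume : Measure (EuclideanSpace ℝ (Fin n))).real (ball 0 (2 * n))
  have : 0 ≤ σ := measureReal_nonneg
  have : 0 ≤ V := measureReal_nonneg
  refine ⟨14 * |A| * σ * V + 1, by positivity, fun K φ g B hK hφ hB hg ↦ ?_⟩
  obtain ⟨y, hy⟩ := hB.exists
  have hB0 : 0 ≤ B := (abs_nonneg _).trans hy
  have hA := hK.nonneg
  have hg_meas := hg.aestronglyMeasurable hK.measurable hφ
  have hint (c : EuclideanSpace ℝ (Fin n)) (l : ℝ) (hl : 0 < l) : IntegrableOn g (cube c l) := by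
    obtain ⟨a, ha⟩ := hK.exists_lintegral_cube_enorm_sub_const_le hφ hB hg c hl
    exact integrableOn_of_lintegral_enorm_sub_const_lt_top hg_meas
      (by rw [volume_cube c hl.le]; exact ENNReal.ofReal_ne_top) a
      (ha.trans_lt ENNReal.ofReal_lt_top)
  have hosc (c : EuclideanSpace ℝ (Fin n)) (l : ℝ) (hl : 0 < l) :
      cubeOsc g c l ≤ (14 * |A| * σ * V + 1) * B := by
    obtain ⟨a, ha⟩ := hK.exists_lintegral_cube_enorm_sub_const_le hφ hB hg c hl
    have := cubeOsc_le_of_lintegral_enorm_sub_le (hint c l hl) hl (by positivity) ha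
    rw [abs_of_nonneg hA]
    linarith
  exact ⟨⟨fun x ↦ ⟨_, isOpen_cube.mem_nhds (mem_cube_toLp_sub_one x), hint _ 2 two_pos⟩, _, hosc⟩,
    hosc⟩

end BMO

section RieszKernel

open Module

variable {n : ℕ}

theorem measurable_rieszK (j : Fin n) : Measurable (rieszK n j) := by
  unfold rieszK
  fun_prop

theorem rieszK_neg (j : Fin n) (x : EuclideanSpace ℝ (Fin n)) :
    rieszK n j (-x) = -rieszK n j x := by
  simp only [rieszK, norm_neg, PiLp.neg_apply, mul_neg, neg_div]

theorem rieszK_smul_of_pos (j : Fin n) (x : EuclideanSpace ℝ (Fin n)) {r : ℝ} (hr : 0 < r) :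
    rieszK n j (r • x) = rieszK n j x / r ^ n := by
  simp only [rieszK, norm_smul, norm_of_nonneg hr.le, PiLp.smul_apply, smul_eq_mul]
  rw [mul_pow, pow_succ r]
  field_simp

/-- The normalising constant `c_n` of the Riesz kernels. -/
noncomputable def rieszConst (n : ℕ) : ℝ := Gamma ((n + 1) / 2) / π ^ (((n : ℝ) + 1) / 2)

theorem rieszConst_nonneg (n : ℕ) : 0 ≤ rieszConst n :=
  div_nonneg (Gamma_nonneg_of_nonneg (by positivity)) (by positivity)

theorem abs_rieszK_le (j : Fin n) (x : EuclideanSpace ℝ (Fin n)) :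
    |rieszK n j x| ≤ rieszConst n / ‖x‖ ^ n := by
  have hc := rieszConst_nonneg n
  calc |rieszK n j x| = rieszConst n * ‖x j‖ / ‖x‖ ^ (n + 1) := by
        rw [rieszK, ← rieszConst, abs_div, abs_mul, abs_of_nonneg hc, abs_pow, abs_norm,
          norm_eq_abs]
    _ ≤ rieszConst n * ‖x‖ / ‖x‖ ^ (n + 1) := by
        gcongr
        exact PiLp.norm_apply_le x j
    _ ≤ rieszConst n / ‖x‖ ^ n := by
        rw [pow_succ', mul_comm, mul_div_mul_comm]
        exact mul_le_of_le_one_left (by positivity) (div_self_le_one _)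

theorem abs_norm_pow_sub_norm_pow_le {F : Type*} [SeminormedAddCommGroup F] {x y : F}
    (h : 2 * ‖x - y‖ ≤ ‖x‖) (m : ℕ) :
    |‖y‖ ^ m - ‖x‖ ^ m| ≤ ‖x - y‖ * m * (2 * ‖x‖) ^ (m - 1) := by
  have hy : ‖y‖ ≤ 2 * ‖x‖ := by linarith [norm_sub_norm_le y x, norm_sub_rev x y, norm_nonneg x]
  have hyx : |‖y‖ - ‖x‖| ≤ ‖x - y‖ := by
    rw [norm_sub_rev]
    exact abs_norm_sub_norm_le y x
  refine (abs_pow_sub_pow_le _ _ _).trans ?_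
  rw [abs_norm, abs_norm]
  gcongr
  exact max_le hy (by linarith [norm_nonneg x])

theorem norm_mul_abs_inv_norm_pow_sub_le {F : Type*} [SeminormedAddCommGroup F] {x y : F}
    (h : 2 * ‖x - y‖ ≤ ‖x‖) (m : ℕ) :
    ‖y‖ * |(‖x‖ ^ (m + 1))⁻¹ - (‖y‖ ^ (m + 1))⁻¹| ≤
      (m + 1) * 4 ^ m * (‖x - y‖ / ‖x‖ ^ (m + 1)) := by
  have hxy : ‖x‖ / 2 ≤ ‖y‖ := by linarith [norm_sub_norm_le x y]
  have hyx : ‖y‖ ≤ 2 * ‖x‖ := by linarith [norm_sub_norm_le y x, norm_sub_rev x y, norm_nonneg x]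
  rcases (norm_nonneg x).eq_or_lt with hx0 | hx0
  · rw [show ‖y‖ = 0 by linarith [norm_nonneg y], zero_mul]
    positivity
  have hy0 : 0 < ‖y‖ := by linarith
  calc ‖y‖ * |(‖x‖ ^ (m + 1))⁻¹ - (‖y‖ ^ (m + 1))⁻¹|
      = |‖y‖ ^ (m + 1) - ‖x‖ ^ (m + 1)| / ‖x‖ ^ (m + 1) / ‖y‖ ^ m := by
        rw [inv_sub_inv (by positivity) (by positivity), abs_div, abs_mul, abs_pow, abs_pow,
          abs_norm, abs_norm, pow_succ' ‖y‖]
        field_simp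
    _ ≤ ‖x - y‖ * (m + 1) * (2 * ‖x‖) ^ m / ‖x‖ ^ (m + 1) / (‖x‖ / 2) ^ m := by
        gcongr
        exact_mod_cast abs_norm_pow_sub_norm_pow_le h (m + 1)
    _ = (m + 1) * 4 ^ m * (‖x - y‖ / ‖x‖ ^ (m + 1)) := by
        rw [div_pow, mul_pow, show (4 : ℝ) = 2 * 2 by norm_num, mul_pow]
        field_simp

theorem abs_rieszK_sub_rieszK_le (j : Fin n) {x y : EuclideanSpace ℝ (Fin n)}
    (h : 2 * ‖x - y‖ ≤ ‖x‖) : |rieszK n j x - rieszK n j y| ≤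
      rieszConst n * (1 + (n + 1) * 4 ^ n) * ‖x - y‖ / ‖x‖ ^ (n + 1) := by
  have hc := rieszConst_nonneg n
  have hsub : rieszK n j x - rieszK n j y = rieszConst n * ((x - y) j / ‖x‖ ^ (n + 1) +
      y j * ((‖x‖ ^ (n + 1))⁻¹ - (‖y‖ ^ (n + 1))⁻¹)) := by
    rw [rieszK, rieszK, ← rieszConst, PiLp.sub_apply]
    ring
  calc |rieszK n j x - rieszK n j y|
      ≤ rieszConst n * (‖(x - y) j‖ / ‖x‖ ^ (n + 1) +
          ‖y j‖ * |(‖x‖ ^ (n + 1))⁻¹ - (‖y‖ ^ (n + 1))⁻¹|) := by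
        rw [hsub, abs_mul, abs_of_nonneg hc]
        gcongr
        refine (abs_add_le _ _).trans_eq ?_
        rw [abs_div, abs_mul, abs_pow, abs_norm, norm_eq_abs, norm_eq_abs]
    _ ≤ rieszConst n * (‖x - y‖ / ‖x‖ ^ (n + 1) +
          ‖y‖ * |(‖x‖ ^ (n + 1))⁻¹ - (‖y‖ ^ (n + 1))⁻¹|) := by
        gcongr
        · exact PiLp.norm_apply_le (x - y) j
        · exact PiLp.norm_apply_le y j
    _ ≤ rieszConst n * (‖x - y‖ / ‖x‖ ^ (n + 1) +
          (n + 1) * 4 ^ n * (‖x - y‖ / ‖x‖ ^ (n + 1))) := by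
        gcongr _ * (_ + ?_)
        exact norm_mul_abs_inv_norm_pow_sub_le h n
    _ = rieszConst n * (1 + (n + 1) * 4 ^ n) * ‖x - y‖ / ‖x‖ ^ (n + 1) := by ring

theorem isOddCZKernel_rieszK (j : Fin n) :
    IsOddCZKernel (rieszK n j) (rieszConst n * (1 + (n + 1) * 4 ^ n)) where
  measurable := measurable_rieszK j
  map_neg := rieszK_neg j
  map_smul_of_pos r x hr := by rw [rieszK_smul_of_pos j x hr, finrank_euclideanSpace_fin]
  abs_le x := by
    rw [finrank_euclideanSpace_fin]
    refine (abs_rieszK_le j x).trans ?_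
    gcongr
    exact le_mul_of_one_le_right (rieszConst_nonneg n) (le_add_of_nonneg_right (by positivity))
  abs_sub_le x y h := by
    rw [finrank_euclideanSpace_fin]
    exact abs_rieszK_sub_rieszK_le j h

end RieszKernel

/-- **Riesz transforms are bounded from `L^∞(ℝⁿ)` to `BMO(ℝⁿ)`:** there is a constant `C(n)`
such that `‖R_j(φ)‖_* ≤ C(n) ‖φ‖_∞` for every `φ ∈ L^∞(ℝⁿ)`. -/
theorem riesz_linf_to_bmo (n : ℕ) :
    ∃ C > (0 : ℝ), ∀ (j : Fin n) (φ g : EuclideanSpace ℝ (Fin n) → ℝ) (B : ℝ),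
      Measurable φ → (∀ x, |φ x| ≤ B) → IsRieszTransformLinf j φ g →
      IsBMO g ∧ ∀ c l, 0 < l → cubeOsc g c l ≤ C * B := by
  rcases eq_zero_or_neZero n with rfl | hn
  · exact ⟨1, one_pos, fun j ↦ j.elim0⟩
  · obtain ⟨C, hC, hbound⟩ :=
      riesz_linf_to_bmo_general n (rieszConst n * (1 + (n + 1) * 4 ^ n))
    exact ⟨C, hC, fun j φ g B hφ hB hg ↦ hbound _ φ g B (isOddCZKernel_rieszK j)
      hφ.aestronglyMeasurable (ae_of_all _ hB) hg⟩
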